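/- For all n, m ≥ 1 and every family X = (X^{k,l}) of complex I₁×I₂ matrices indexed by 1 ≤ k ≤ n, 1 ≤ l ≤ m, the fourth-order block Toeplitz-plus-Hankel matrix of X is block-diagonalized: (C_m ⊗ C_n ⊗ I_{I₁}) · btph(X) · (C_mᵀ ⊗ C_nᵀ ⊗ I_{I₂}) equals the block-diagonal matrix whose ((l−1)n+k)-th diagonal block is X̂^{k,l} = ∑_{k'=1}^n ∑_{l'=1}^m (M_n)_{k,k'} (M_m)_{l,l'} X^{k',l'}. -/

import Mathlib

open Matrix Kronecker

noncomputable section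

/-- The discrete cosine transform (DCT) matrix `C_n`. -/
def dctMatrix (n : ℕ) : Matrix (Fin n) (Fin n) ℝ :=
  Matrix.of fun i j =>
    Real.sqrt ((2 - if (i : ℕ) = 0 then (1 : ℝ) else 0) / n) *
      Real.cos ((i : ℕ) * (2 * (j : ℕ) + 1) * Real.pi / (2 * n))

/-- Toeplitz-plus-Hankel selector (0-based indexing). -/
def thSelect {m : ℕ} {β : Type*} [AddCommMonoid β] (B : Fin m → β) (i j : Fin m) : β :=
  B ⟨(((i : ℕ) : ℤ) - ((j : ℕ) : ℤ)).natAbs, by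
      have hi := i.isLt; have hj := j.isLt; omega⟩ +
  (if h1 : (i : ℕ) + (j : ℕ) + 2 ≤ m then
      B ⟨(i : ℕ) + (j : ℕ) + 1, by omega⟩
   else if h2 : (i : ℕ) + (j : ℕ) + 2 = m + 1 then 0
   else
      B ⟨2 * m - 1 - ((i : ℕ) + (j : ℕ)), by
        have hi := i.isLt; have hj := j.isLt; omega⟩)

/-- The block Toeplitz-plus-Hankel matrix `btph(A)` of a family of `I₁×I₂` matrices. -/
def btph {n I₁ I₂ : ℕ} (A : Fin n → Matrix (Fin I₁) (Fin I₂) ℂ) :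
    Matrix (Fin n × Fin I₁) (Fin n × Fin I₂) ℂ :=
  Matrix.of fun p q => thSelect A p.1 q.1 p.2 q.2

/-- The fourth-order block Toeplitz-plus-Hankel matrix of a family
`X = (X^{k,l})` of `I₁×I₂` matrices: blocks over `l`, with block `B_l = btph(X_{·,l})`. -/
def btph4 {n m I₁ I₂ : ℕ} (X : Fin n → Fin m → Matrix (Fin I₁) (Fin I₂) ℂ) :
    Matrix (Fin m × (Fin n × Fin I₁)) (Fin m × (Fin n × Fin I₂)) ℂ :=
  Matrix.of fun p q => thSelect (fun l => btph fun k => X k l) p.1 q.1 p.2 q.2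

/-- `W_n`: the diagonal matrix whose diagonal is the first column of `C_n`. -/
def Wmat (n : ℕ) : Matrix (Fin n) (Fin n) ℝ :=
  Matrix.diagonal fun i => dctMatrix n i ⟨0, i.pos⟩

/-- `Z_n`: the upshift matrix. -/
def Zmat (n : ℕ) : Matrix (Fin n) (Fin n) ℝ :=
  Matrix.of fun i j => if (i : ℕ) + 1 = (j : ℕ) then 1 else 0

/-- `M_n = W_n⁻¹ C_n (I_n + Z_n)`. -/
def Mmat (n : ℕ) : Matrix (Fin n) (Fin n) ℝ :=
  (Wmat n)⁻¹ * dctMatrix n * (1 + Zmat n)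

/-- The elementary Toeplitz-plus-Hankel matrices. -/
def thE (n : ℕ) (k : Fin n) : Matrix (Fin n) (Fin n) ℝ :=
  Matrix.of fun i j => thSelect (fun k' => if k' = k then (1 : ℝ) else 0) i j

lemma thSelect_apply2 {m : ℕ} {α β : Type*} (B : Fin m → Matrix α β ℂ) (i j : Fin m) (a : α) (b : β) :
    thSelect B i j a b = ∑ k, (thE m k i j : ℂ) * B k a b := by
  simp only [thE, thSelect, Matrix.of_apply]
  split_ifs <;> simp [add_mul, Finset.sum_add_distrib, Matrix.add_apply, apply_ite Complex.ofReal]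

lemma cos_theta_pos {n : ℕ} (l : Fin n) : 0 < Real.cos ((l : ℕ) * Real.pi / (2 * n)) := by
  have hn : (0 : ℝ) < n := by exact_mod_cast l.pos
  have hl : ((l : ℕ) : ℝ) < n := by exact_mod_cast l.isLt
  apply Real.cos_pos_of_mem_Ioo
  constructor
  · have : 0 ≤ ((l : ℕ) : ℝ) * Real.pi / (2 * n) := by positivity
    linarith [Real.pi_pos]
  · rw [div_lt_div_iff₀ (by positivity) (by positivity)]
    nlinarith [Real.pi_pos]

lemma sqrt_fac_pos {n : ℕ} (l : Fin n) :
    0 < Real.sqrt ((2 - if (l : ℕ) = 0 then (1 : ℝ) else 0) / n) := by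
  have hn : (0 : ℝ) < n := by exact_mod_cast l.pos
  apply Real.sqrt_pos.2
  apply div_pos _ hn
  split_ifs <;> norm_num

lemma dct_zero_pos {n : ℕ} (l : Fin n) : 0 < dctMatrix n l ⟨0, l.pos⟩ := by
  simp only [dctMatrix, Matrix.of_apply]
  apply mul_pos (sqrt_fac_pos l)
  simpa using cos_theta_pos l

lemma Wmat_mul_Mmat (n : ℕ) : Wmat n * Mmat n = dctMatrix n * (1 + Zmat n) := by
  have h : IsUnit (Wmat n).det := by
    rw [Wmat, Matrix.det_diagonal, isUnit_iff_ne_zero]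
    exact Finset.prod_ne_zero_iff.2 fun i _ => (dct_zero_pos i).ne'
  rw [Mmat, Matrix.mul_assoc, Matrix.mul_nonsing_inv_cancel_left _ _ h]

lemma Mmat_apply {n : ℕ} (l k : Fin n) :
    Mmat n l k = if (k : ℕ) = 0 then 1 else 2 * Real.cos ((l : ℕ) * k * Real.pi / n) := by
  have h := congrFun (congrFun (Wmat_mul_Mmat n) l) k
  have h0 := dct_zero_pos l
  have hn : (n : ℝ) ≠ 0 := by exact_mod_cast l.pos.ne'
  rw [Wmat, Matrix.diagonal_mul, Matrix.mul_add, Matrix.add_apply, Matrix.mul_one] at h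
  apply mul_left_cancel₀ h0.ne'
  rw [h]
  split_ifs with hk
  · have hz : (dctMatrix n * Zmat n) l k = 0 := by
      rw [Matrix.mul_apply]
      apply Finset.sum_eq_zero
      intro j _
      simp [Zmat, hk]
    have : k = ⟨0, l.pos⟩ := Fin.ext hk
    rw [hz, this]; ring
  · have hz : (dctMatrix n * Zmat n) l k = dctMatrix n l ⟨k - 1, by omega⟩ := by
      rw [Matrix.mul_apply, Finset.sum_eq_single ⟨k - 1, by omega⟩]
      · have : (k : ℕ) - 1 + 1 = k := by omega
        simp [Zmat, this]
      · intro j _ hj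
        have : ¬ ((j : ℕ) + 1 = k) := fun h => hj (Fin.ext (by simp; omega))
        simp [Zmat, this]
      · simp
    rw [hz]
    simp only [dctMatrix, Matrix.of_apply]
    have e : (((k : ℕ) - 1 : ℕ) : ℝ) = (k : ℕ) - 1 := by
      rw [Nat.cast_sub (by omega)]; simp
    rw [e, ← mul_add]
    have e1 : ((l : ℕ) : ℝ) * (2 * (k : ℕ) + 1) * Real.pi / (2 * n)
      = (l : ℕ) * (k : ℕ) * Real.pi / n + (l : ℕ) * Real.pi / (2 * n) := by field_simp
    have e2 : ((l : ℕ) : ℝ) * (2 * ((k : ℕ) - 1) + 1) * Real.pi / (2 * n)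
      = (l : ℕ) * (k : ℕ) * Real.pi / n - (l : ℕ) * Real.pi / (2 * n) := by field_simp; ring
    have e3 : ((l : ℕ) : ℝ) * (2 * ((0 : ℕ) : ℝ) + 1) * Real.pi / (2 * n)
      = (l : ℕ) * Real.pi / (2 * n) := by simp
    rw [e1, e2, e3, Real.cos_add, Real.cos_sub]
    ring

/-- Forward neighbour with reflection. -/
def pIdx {n : ℕ} (i k : Fin n) : Fin n :=
  if h : (i : ℕ) + k < n then ⟨i + k, h⟩ else ⟨2 * n - 1 - i - k, by omega⟩

/-- Backward neighbour with reflection. -/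
def qIdx {n : ℕ} (i k : Fin n) : Fin n :=
  if h : (k : ℕ) ≤ i then ⟨i - k, by omega⟩ else ⟨k - 1 - i, by omega⟩

lemma thE_zero {n : ℕ} (k i j : Fin n) (hk : (k : ℕ) = 0) :
    thE n k i j = if j = i then 1 else 0 := by
  simp only [thE, thSelect, Matrix.of_apply, Fin.ext_iff, hk]
  split_ifs <;> first | omega | contradiction | norm_num

lemma thE_pos {n : ℕ} (k i j : Fin n) (hk : (k : ℕ) ≠ 0) :
    thE n k i j = (if j = pIdx i k then 1 else 0) + (if j = qIdx i k then 1 else 0) := by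
  have hi := i.isLt
  have hj := j.isLt
  have hkn := k.isLt
  by_cases hp : (i : ℕ) + k < n <;> by_cases hq : (k : ℕ) ≤ i <;>
  simp only [thE, thSelect, Matrix.of_apply, Fin.ext_iff, pIdx, qIdx, hp, hq, dif_pos, dif_neg,
    not_false_eq_true] <;>
  split_ifs <;> first | omega | norm_num

lemma dct_p {n : ℕ} (l i k : Fin n) : Real.cos ((l : ℕ) * (2 * (pIdx i k : ℕ) + 1) * Real.pi / (2 * n))
    = Real.cos ((l : ℕ) * (2 * ((i : ℕ) + (k : ℕ) : ℝ) + 1) * Real.pi / (2 * n)) := by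
  have hn : (n : ℝ) ≠ 0 := by exact_mod_cast l.pos.ne'
  unfold pIdx
  split_ifs with h
  · simp
  · have e : ((2 * n - 1 - i - k : ℕ) : ℝ) = 2 * n - 1 - (i : ℕ) - (k : ℕ) := by
      rw [Nat.cast_sub (by omega), Nat.cast_sub (by omega), Nat.cast_sub (by omega)]; simp
    simp only [e]
    rw [← Real.cos_nat_mul_two_pi_sub _ (l : ℕ)]
    congr 1
    field_simp
    ring

lemma dct_q {n : ℕ} (l i k : Fin n) : Real.cos ((l : ℕ) * (2 * (qIdx i k : ℕ) + 1) * Real.pi / (2 * n))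
    = Real.cos ((l : ℕ) * (2 * ((i : ℕ) - (k : ℕ) : ℝ) + 1) * Real.pi / (2 * n)) := by
  unfold qIdx
  split_ifs with h
  · simp [Nat.cast_sub h]
  · have e : ((k - 1 - i : ℕ) : ℝ) = (k : ℕ) - 1 - (i : ℕ) := by
      rw [Nat.cast_sub (by omega), Nat.cast_sub (by omega)]; simp
    simp only [e]
    rw [← Real.cos_neg]
    congr 1
    ring

lemma thE_mul_dct {n : ℕ} (k : Fin n) :
    thE n k * (dctMatrix n)ᵀ = (dctMatrix n)ᵀ * Matrix.diagonal (fun l => Mmat n l k) := by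
  ext i l
  have hn : (n : ℝ) ≠ 0 := by exact_mod_cast l.pos.ne'
  rw [Matrix.mul_diagonal, Matrix.mul_apply, Mmat_apply]
  simp only [Matrix.transpose_apply]
  split_ifs with hk
  · simp [thE_zero _ _ _ hk]
  · simp only [thE_pos _ _ _ hk, add_mul, Finset.sum_add_distrib, ite_mul, one_mul, zero_mul,
      Finset.sum_ite_eq', Finset.sum_ite_eq, Finset.mem_univ, if_true]
    simp only [dctMatrix, Matrix.of_apply, dct_p, dct_q]
    rw [← mul_add]
    have e1 : ((l : ℕ) : ℝ) * (2 * ((i : ℕ) + (k : ℕ)) + 1) * Real.pi / (2 * n)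
      = (l : ℕ) * (2 * (i : ℕ) + 1) * Real.pi / (2 * n) + (l : ℕ) * (k : ℕ) * Real.pi / n := by
        field_simp; ring
    have e2 : ((l : ℕ) : ℝ) * (2 * ((i : ℕ) - (k : ℕ)) + 1) * Real.pi / (2 * n)
      = (l : ℕ) * (2 * (i : ℕ) + 1) * Real.pi / (2 * n) - (l : ℕ) * (k : ℕ) * Real.pi / n := by
        field_simp; ring
    rw [e1, e2, Real.cos_add, Real.cos_sub]
    ring

lemma sum_cos_odd (a : ℝ) (n : ℕ) :
    2 * Real.sin a * ∑ j ∈ Finset.range n, Real.cos ((2 * j + 1) * a) = Real.sin (2 * n * a) := by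
  induction n with
  | zero => simp
  | succ n ih =>
    rw [Finset.sum_range_succ, mul_add, ih]
    push_cast
    have e1 : 2 * (n : ℝ) * a = (2 * n + 1) * a - a := by ring
    have e2 : 2 * ((n : ℝ) + 1) * a = (2 * n + 1) * a + a := by ring
    rw [e1, e2, Real.sin_add, Real.sin_sub]
    ring

lemma sum_cos_zero (n : ℕ) (d : ℤ) (h0 : d ≠ 0) (h1 : |d| < 2 * n) :
    ∑ j : Fin n, Real.cos ((2 * (j : ℕ) + 1) * (d * Real.pi / (2 * n))) = 0 := by
  have hn : (n : ℝ) ≠ 0 := by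
    rintro h
    have : n = 0 := by exact_mod_cast h
    have := abs_nonneg d
    subst n; simp at h1; omega
  have h := sum_cos_odd (d * Real.pi / (2 * n)) n
  have e : 2 * (n : ℝ) * (d * Real.pi / (2 * n)) = d * Real.pi := by field_simp
  rw [e, Real.sin_int_mul_pi] at h
  rw [Fin.sum_univ_eq_sum_range (fun j : ℕ => Real.cos ((2 * (j : ℝ) + 1) * (d * Real.pi / (2 * n)))) n]
  rcases mul_eq_zero.1 h with h | h
  · exfalso
    have hs : Real.sin (d * Real.pi / (2 * n)) = 0 := by linarith
    obtain ⟨z, hz⟩ := Real.sin_eq_zero_iff.1 hs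
    have hz' : (z : ℝ) * (2 * n) = d := by
      field_simp at hz
      linarith
    have hz2 : z * (2 * n) = d := by exact_mod_cast hz'
    apply h0
    apply Int.eq_zero_of_abs_lt_dvd (m := 2 * n) ⟨z, by rw [← hz2]; ring⟩ h1
  · exact h

lemma dct_orth (n : ℕ) : dctMatrix n * (dctMatrix n)ᵀ = 1 := by
  ext a b
  have hn : (0 : ℝ) < n := by exact_mod_cast a.pos
  have key : (dctMatrix n * (dctMatrix n)ᵀ) a b =
      Real.sqrt ((2 - if (a : ℕ) = 0 then (1 : ℝ) else 0) / n) *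
      Real.sqrt ((2 - if (b : ℕ) = 0 then (1 : ℝ) else 0) / n) * ((1 / 2) *
      (∑ j : Fin n, Real.cos ((2 * (j : ℕ) + 1) * (((a : ℤ) - (b : ℤ) : ℤ) * Real.pi / (2 * n))) +
       ∑ j : Fin n, Real.cos ((2 * (j : ℕ) + 1) * (((a : ℤ) + (b : ℤ) : ℤ) * Real.pi / (2 * n))))) := by
    rw [Matrix.mul_apply, ← Finset.sum_add_distrib, Finset.mul_sum, Finset.mul_sum]
    apply Finset.sum_congr rfl
    intro j _
    simp only [dctMatrix, Matrix.of_apply, Matrix.transpose_apply]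
    push_cast
    have e1 : (2 * ((j : ℕ) : ℝ) + 1) * ((((a : ℕ) : ℝ) - (b : ℕ)) * Real.pi / (2 * n))
      = (a : ℕ) * (2 * (j : ℕ) + 1) * Real.pi / (2 * n) - (b : ℕ) * (2 * (j : ℕ) + 1) * Real.pi / (2 * n) := by ring
    have e2 : (2 * ((j : ℕ) : ℝ) + 1) * ((((a : ℕ) : ℝ) + (b : ℕ)) * Real.pi / (2 * n))
      = (a : ℕ) * (2 * (j : ℕ) + 1) * Real.pi / (2 * n) + (b : ℕ) * (2 * (j : ℕ) + 1) * Real.pi / (2 * n) := by ring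
    rw [e1, e2, Real.cos_add, Real.cos_sub]
    ring
  rw [key]
  have ha := a.isLt
  have hb := b.isLt
  by_cases hab : a = b
  · subst hab
    rw [Matrix.one_apply_eq, Real.mul_self_sqrt (by split_ifs <;> first | positivity | (norm_num))]
    by_cases h0 : (a : ℕ) = 0
    · simp [h0]; field_simp; norm_num
    · rw [sum_cos_zero n ((a : ℤ) + (a : ℤ)) (by omega) (by rw [abs_lt]; omega)]
      simp [h0]
      field_simp
  · have hab' : (a : ℕ) ≠ b := fun h => hab (Fin.ext h)
    rw [sum_cos_zero n ((a : ℤ) + (b : ℤ)) (by omega) (by rw [abs_lt]; omega),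
      sum_cos_zero n ((a : ℤ) - (b : ℤ)) (by omega) (by rw [abs_lt]; omega), Matrix.one_apply_ne hab]
    simp

lemma dct_conj {n : ℕ} (k : Fin n) :
    dctMatrix n * thE n k * (dctMatrix n)ᵀ = Matrix.diagonal (fun l => Mmat n l k) := by
  rw [Matrix.mul_assoc, thE_mul_dct, ← Matrix.mul_assoc, dct_orth, Matrix.one_mul]

lemma dct_conjC {n : ℕ} (k : Fin n) :
    (dctMatrix n).map Complex.ofReal * (thE n k).map Complex.ofReal *
      ((dctMatrix n).map Complex.ofReal)ᵀ = Matrix.diagonal (fun l => (Mmat n l k : ℂ)) := by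
  have h := congrArg (fun A : Matrix (Fin n) (Fin n) ℝ => A.map Complex.ofRealHom) (dct_conj k)
  simp only [Matrix.map_mul] at h
  refine Eq.trans h ?_
  rw [Matrix.diagonal_map (by simp)]
  rfl

lemma btph4_eq {n m I₁ I₂ : ℕ} (X : Fin n → Fin m → Matrix (Fin I₁) (Fin I₂) ℂ) :
    btph4 X = ∑ k, ∑ l, (thE m l).map Complex.ofReal ⊗ₖ ((thE n k).map Complex.ofReal ⊗ₖ X k l) := by
  ext ⟨a, b, c⟩ ⟨a', b', c'⟩
  simp only [btph4, btph, Matrix.of_apply, thSelect_apply2, Matrix.sum_apply,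
    Matrix.kroneckerMap_apply, Matrix.map_apply, Finset.mul_sum]
  exact Finset.sum_comm

/-- For all `n, m ≥ 1` and every family `X = (X^{k,l})` of complex `I₁×I₂` matrices:
`(C_m ⊗ C_n ⊗ I_{I₁}) · btph(X) · (C_mᵀ ⊗ C_nᵀ ⊗ I_{I₂})` is the block-diagonal matrix
whose `(k,l)`-th diagonal block is `X̂^{k,l} = ∑_{k',l'} (M_n)_{k,k'} (M_m)_{l,l'} X^{k',l'}`. -/
theorem dct_block_diagonalizes_btph4 (n m I₁ I₂ : ℕ) (hn : 1 ≤ n) (hm : 1 ≤ m)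
    (X : Fin n → Fin m → Matrix (Fin I₁) (Fin I₂) ℂ) :
    ((dctMatrix m).map (Complex.ofReal) ⊗ₖ
        ((dctMatrix n).map (Complex.ofReal) ⊗ₖ (1 : Matrix (Fin I₁) (Fin I₁) ℂ))) * btph4 X *
      (((dctMatrix m).map (Complex.ofReal))ᵀ ⊗ₖ
        (((dctMatrix n).map (Complex.ofReal))ᵀ ⊗ₖ (1 : Matrix (Fin I₂) (Fin I₂) ℂ)))
      = Matrix.of fun p q =>
          if p.1 = q.1 ∧ p.2.1 = q.2.1 then
            (∑ k' : Fin n, ∑ l' : Fin m,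
              ((Mmat n p.2.1 k' * Mmat m p.1 l' : ℝ) : ℂ) • X k' l') p.2.2 q.2.2
          else 0 := by
  rw [btph4_eq]
  simp only [Finset.mul_sum, Finset.sum_mul, Matrix.mul_sum, Matrix.sum_mul,
    ← Matrix.mul_kronecker_mul, dct_conjC, Matrix.one_mul, Matrix.mul_one]
  ext ⟨a, b, c⟩ ⟨a', b', c'⟩
  simp only [Matrix.of_apply, Matrix.sum_apply, Matrix.kroneckerMap_apply, Matrix.diagonal_apply,
    Matrix.smul_apply, smul_eq_mul, Complex.ofReal_mul]
  by_cases h1 : a = a' <;> by_cases h2 : b = b' <;> simp [h1, h2]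
  apply Finset.sum_congr rfl
  intro k _
  apply Finset.sum_congr rfl
  intro l _
  ring
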